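/- arXiv:1611.00841 — 6 statements merged into one kernel-verified Lean document; each statement's English description precedes it below -/
import Mathlib

section
/- Let G be a group acting on the vertex type X of a connected simple graph Γ by graph automorphisms (i.e. for all g ∈ G and vertices a, b, a and b are adjacent in Γ if and only if g•a and g•b are adjacent). Let V ⊆ X × X be a set of pairs of vertices. Suppose there is a vertex c ∈ X such that: (1) the set of pairs (a,b) ∈ V with both a and b in the orbit G·c is contained in finitely many orbits of the diagonal G-action on X × X; and (2) for all a, b ∈ G·c with (a,b) ∉ V there exists d ∈ G·c with (a,d) ∈ V and (b,d) ∈ V. Then every G-orbit in X has finite diameter with respect to the graph metric: for every x ∈ X there exists D ∈ ℕ such that d_Γ(g•x, h•x) ≤ D for all g, h ∈ G. -/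
/-! A pair in the orbit of `q` is no farther apart than `q`, so the pairs of `V` with both entries
in the orbit of `c`, lying in finitely many orbits, have uniformly bounded distance `M`. Any two
points of the orbit of `c` are joined by at most two such pairs, hence are at distance at most
`2 * M`. Replacing `c` by `x` costs at most `2 * Γ.dist x c`. -/

section Hom

variable {X Y : Type*} {Γ : SimpleGraph X} {Δ : SimpleGraph Y} {x y : X}

theorem dist_hom_apply_le (f : Γ →g Δ) (hxy : Γ.Reachable x y) :
    Δ.dist (f x) (f y) ≤ Γ.dist x y := by
  obtain ⟨w, hw⟩ := hxy.exists_walk_length_eq_dist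
  calc
    Δ.dist (f x) (f y) ≤ (w.map f).length := SimpleGraph.dist_le _
    _ = Γ.dist x y := by rw [SimpleGraph.Walk.length_map, hw]

theorem dist_hom_hom_le_add_two_mul (f g : Γ →g Δ) (hxy : Γ.Reachable x y) :
    Δ.dist (f x) (g x) ≤ Δ.dist (f y) (g y) + 2 * Γ.dist x y := by
  calc
    Δ.dist (f x) (g x) ≤ Δ.dist (f x) (f y) + Δ.dist (f y) (g x) :=
      (hxy.map f).dist_triangle_left _
    _ ≤ Δ.dist (f x) (f y) + (Δ.dist (f y) (g y) + Δ.dist (g y) (g x)) := by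
      gcongr
      exact (hxy.symm.map g).dist_triangle_right _
    _ ≤ Γ.dist x y + (Δ.dist (f y) (g y) + Γ.dist x y) := by
      gcongr
      · exact dist_hom_apply_le f hxy
      · rw [SimpleGraph.dist_comm]
        exact dist_hom_apply_le g hxy
    _ = Δ.dist (f y) (g y) + 2 * Γ.dist x y := by ring

end Hom

theorem dist_le_two_mul_of_exists_common {X : Type*} {Γ : SimpleGraph X} (hconn : Γ.Connected)
    {S : Set X} {V : Set (X × X)} {M : ℕ}
    (hV : ∀ a ∈ S, ∀ b ∈ S, (a, b) ∈ V → Γ.dist a b ≤ M)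
    (hcommon : ∀ a ∈ S, ∀ b ∈ S, (a, b) ∉ V → ∃ d ∈ S, (a, d) ∈ V ∧ (b, d) ∈ V)
    {a b : X} (ha : a ∈ S) (hb : b ∈ S) : Γ.dist a b ≤ 2 * M := by
  by_cases hab : (a, b) ∈ V
  · exact (hV a ha b hb hab).trans (Nat.le_mul_of_pos_left M two_pos)
  · obtain ⟨d, hd, had, hbd⟩ := hcommon a ha b hb hab
    calc
      Γ.dist a b ≤ Γ.dist a d + Γ.dist b d := by
        rw [Γ.dist_comm (u := b)]
        exact hconn.dist_triangle
      _ ≤ M + M := add_le_add (hV a ha d hd had) (hV b hb d hd hbd)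
      _ = 2 * M := (two_mul M).symm

section Action

variable {G X : Type*} [SMul G X] {Γ : SimpleGraph X}

/-- The graph endomorphism by which `g` acts, for a scalar multiplication preserving adjacency. -/
def smulHom (hact : ∀ (g : G) (a b : X), Γ.Adj a b → Γ.Adj (g • a) (g • b)) (g : G) : Γ →g Γ where
  toFun a := g • a
  map_rel' := hact g _ _

theorem dist_le_of_mem_orbit (hact : ∀ (g : G) (a b : X), Γ.Adj a b → Γ.Adj (g • a) (g • b))
    {p q : X × X} (hq : Γ.Reachable q.1 q.2) (hp : p ∈ MulAction.orbit G q) :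
    Γ.dist p.1 p.2 ≤ Γ.dist q.1 q.2 := by
  obtain ⟨g, rfl⟩ := hp
  exact dist_hom_apply_le (smulHom hact g) hq

theorem exists_dist_le_of_mem_orbit_finset (hconn : Γ.Preconnected)
    (hact : ∀ (g : G) (a b : X), Γ.Adj a b → Γ.Adj (g • a) (g • b)) (F : Finset (X × X)) :
    ∃ M : ℕ, ∀ q ∈ F, ∀ p ∈ MulAction.orbit G q, Γ.dist p.1 p.2 ≤ M :=
  ⟨F.sup fun q => Γ.dist q.1 q.2, fun q hq _ hp =>
    (dist_le_of_mem_orbit hact (hconn q.1 q.2) hp).trans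
      (Finset.le_sup (f := fun q : X × X => Γ.dist q.1 q.2) hq)⟩

end Action

theorem finite_diameter_orbits_criterion_general {G X : Type*} [SMul G X]
    (Γ : SimpleGraph X) (hconn : Γ.Connected)
    (hact : ∀ (g : G) (a b : X), Γ.Adj a b → Γ.Adj (g • a) (g • b))
    (V : Set (X × X)) (c : X)
    (h1 : ∃ F : Finset (X × X), ∀ p ∈ V,
      p.1 ∈ MulAction.orbit G c → p.2 ∈ MulAction.orbit G c →
        ∃ q ∈ F, p ∈ MulAction.orbit G q)
    (h2 : ∀ a ∈ MulAction.orbit G c, ∀ b ∈ MulAction.orbit G c, (a, b) ∉ V →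
      ∃ d ∈ MulAction.orbit G c, (a, d) ∈ V ∧ (b, d) ∈ V) :
    ∀ x : X, ∃ D : ℕ, ∀ g h : G, Γ.dist (g • x) (h • x) ≤ D := by
  obtain ⟨F, hF⟩ := h1
  obtain ⟨M, hM⟩ := exists_dist_le_of_mem_orbit_finset hconn.preconnected hact F
  have hV : ∀ a ∈ MulAction.orbit G c, ∀ b ∈ MulAction.orbit G c, (a, b) ∈ V →
      Γ.dist a b ≤ M := by
    intro a ha b hb hab
    obtain ⟨q, hq, habq⟩ := hF (a, b) hab ha hb
    exact hM q hq (a, b) habq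
  intro x
  refine ⟨2 * M + 2 * Γ.dist x c, fun g h => ?_⟩
  calc
    Γ.dist (g • x) (h • x) ≤ Γ.dist (g • c) (h • c) + 2 * Γ.dist x c :=
      dist_hom_hom_le_add_two_mul (smulHom hact g) (smulHom hact h) (hconn x c)
    _ ≤ 2 * M + 2 * Γ.dist x c := by
      gcongr
      exact dist_le_two_mul_of_exists_common hconn hV h2 ⟨g, rfl⟩ ⟨h, rfl⟩

/-- Proposition 4.1 of the paper (criterion for finite-diameter orbits), in the
setting of a group `G` acting by automorphisms on a connected simple graph `Γ`. -/
theorem finite_diameter_orbits_criterion {G X : Type*} [Group G] [MulAction G X]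
    (Γ : SimpleGraph X) (hconn : Γ.Connected)
    (hact : ∀ (g : G) (a b : X), Γ.Adj a b ↔ Γ.Adj (g • a) (g • b))
    (V : Set (X × X)) (c : X)
    (h1 : ∃ F : Finset (X × X), ∀ p ∈ V,
      p.1 ∈ MulAction.orbit G c → p.2 ∈ MulAction.orbit G c →
        ∃ q ∈ F, p ∈ MulAction.orbit G q)
    (h2 : ∀ a ∈ MulAction.orbit G c, ∀ b ∈ MulAction.orbit G c, (a, b) ∉ V →
      ∃ d ∈ MulAction.orbit G c, (a, d) ∈ V ∧ (b, d) ∈ V) :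
    ∀ x : X, ∃ D : ℕ, ∀ g h : G, Γ.dist (g • x) (h • x) ≤ D :=
  finite_diameter_orbits_criterion_general Γ hconn (fun g a b => (hact g a b).1) V c h1 h2
end

section
/- Let Γ be a connected simple graph on a vertex type X, let Y ⊆ X be such that the induced subgraph Γ[Y] is connected, and let A, B ∈ ℕ. Suppose there is an (A,B)-quasi-retract r of Γ onto Y, i.e. r assigns to each vertex x ∈ X a nonempty subset r(x) ⊆ Y such that: (i) the diameter of r(x) with respect to d_{Γ[Y]} is at most A for every x ∈ X; (ii) whenever x = x' or x and x' are adjacent in Γ, there exist p ∈ r(x) and q ∈ r(x') with d_{Γ[Y]}(p,q) ≤ B; and (iii) r(y) = {y} for every y ∈ Y. If Γ[Y] has infinite diameter (for every n ∈ ℕ there exist y, y' ∈ Y with d_{Γ[Y]}(y,y') ≥ n), then Γ has infinite diameter (for every n ∈ ℕ there exist u, v ∈ X with d_Γ(u,v) ≥ n). -/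
/-!
A walk of length `n` in the source is shadowed in the target by alternately moving inside one value
of the set-valued map, at cost at most `A`, and crossing to the value at the next vertex, at cost at
most `B`. Points in the values at the two ends of the walk are therefore at distance at most
`A + n * (A + B)`, so a bound on distances in the source would bound distances in the target.
-/

/-- A set-valued coarsely Lipschitz map between graphs: each value has diameter at most `A`, and the
values at adjacent vertices come within distance `B` of each other. This is the part of the notion
of an `(A, B)`-quasi-retract that does not mention the inclusion of the target into the source.
It is meant for connected `H`, since `H.dist` is `0` between different components. -/
structure IsCoarselyLipschitz {V W : Type*} (G : SimpleGraph V) (H : SimpleGraph W) (A B : ℕ)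
    (r : V → Set W) : Prop where
  dist_le_of_mem : ∀ ⦃v : V⦄ ⦃p q : W⦄, p ∈ r v → q ∈ r v → H.dist p q ≤ A
  exists_dist_le_of_adj : ∀ ⦃v v' : V⦄, G.Adj v v' → ∃ p ∈ r v, ∃ q ∈ r v', H.dist p q ≤ B

section

variable {V W : Type*} {G : SimpleGraph V} {H : SimpleGraph W} {A B : ℕ} {r : V → Set W}

namespace IsCoarselyLipschitz

theorem dist_le_walk_length (hr : IsCoarselyLipschitz G H A B r) (hH : H.Connected)
    {u v : V} (w : G.Walk u v) {p q : W} (hp : p ∈ r u) (hq : q ∈ r v) :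
    H.dist p q ≤ A + w.length * (A + B) := by
  induction w generalizing p with
  | nil =>
    simpa only [SimpleGraph.Walk.length_nil, zero_mul, add_zero] using hr.dist_le_of_mem hp hq
  | cons hadj w ih =>
    obtain ⟨p', hp', q', hq', hcross⟩ := hr.exists_dist_le_of_adj hadj
    calc
      H.dist p q ≤ H.dist p p' + (H.dist p' q' + H.dist q' q) :=
        hH.dist_triangle.trans (Nat.add_le_add_left hH.dist_triangle _)
      _ ≤ A + (B + (A + w.length * (A + B))) := by
        gcongr
        exacts [hr.dist_le_of_mem hp hp', ih hq' hq]
      _ = A + (w.cons hadj).length * (A + B) := by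
        rw [SimpleGraph.Walk.length_cons]
        ring

theorem dist_le_dist (hr : IsCoarselyLipschitz G H A B r) (hH : H.Connected)
    {u v : V} (huv : G.Reachable u v) {p q : W} (hp : p ∈ r u) (hq : q ∈ r v) :
    H.dist p q ≤ A + G.dist u v * (A + B) := by
  obtain ⟨w, hw⟩ := huv.exists_walk_length_eq_dist
  exact hw ▸ hr.dist_le_walk_length hH w hp hq

end IsCoarselyLipschitz

theorem quasi_retract_infinite_diameter_general (hr : IsCoarselyLipschitz G H A B r)
    (hH : H.Connected) (f : H →g G) (hf : ∀ w : W, w ∈ r (f w))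
    (hinf : ∀ n : ℕ, ∃ w w' : W, n ≤ H.dist w w') :
    ∀ n : ℕ, ∃ u v : V, n ≤ G.dist u v := by
  intro n
  obtain ⟨w, w', hfar⟩ := hinf (A + n * (A + B) + 1)
  refine ⟨f w, f w', ?_⟩
  by_contra! hnear
  have hreach : G.Reachable (f w) (f w') := (hH w w').map f
  have hbound : H.dist w w' ≤ A + n * (A + B) :=
    calc
      H.dist w w' ≤ A + G.dist (f w) (f w') * (A + B) := hr.dist_le_dist hH hreach (hf w) (hf w')
      _ ≤ A + n * (A + B) := by gcongr
  exact hfar.not_gt (Nat.lt_succ_of_le hbound)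

end

/-- Graph form of Corollary 5.3: if a connected graph `Γ` admits an `(A,B)`-quasi-retract
onto a subset `Y` whose induced subgraph is connected and has infinite diameter, then `Γ`
has infinite diameter. -/
theorem quasi_retract_infinite_diameter {X : Type*} (Γ : SimpleGraph X)
    (hconn : Γ.Connected) (Y : Set X) (hYconn : (Γ.induce Y).Connected)
    (A B : ℕ) (r : X → Set Y)
    (hne : ∀ x : X, (r x).Nonempty)
    (hdiam : ∀ x : X, ∀ p ∈ r x, ∀ q ∈ r x, (Γ.induce Y).dist p q ≤ A)
    (hlip : ∀ x x' : X, (x = x' ∨ Γ.Adj x x') →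
      ∃ p ∈ r x, ∃ q ∈ r x', (Γ.induce Y).dist p q ≤ B)
    (hretr : ∀ y : Y, r (y : X) = {y})
    (hinf : ∀ n : ℕ, ∃ y y' : Y, n ≤ (Γ.induce Y).dist y y') :
    ∀ n : ℕ, ∃ u v : X, n ≤ Γ.dist u v :=
  quasi_retract_infinite_diameter_general
    ⟨fun x p q hp hq => hdiam x p hp q hq, fun x x' hadj => hlip x x' (Or.inr hadj)⟩
    hYconn (SimpleGraph.Embedding.induce Y).toHom
    (fun y => (hretr y).symm ▸ Set.mem_singleton y) hinf
end

section
/- Let Γ be a connected simple graph on a vertex type X and let δ ∈ ℕ. Let 𝒴 be a family of subsets of X such that: (1) for each Y ∈ 𝒴 the induced subgraph Γ[Y] is connected; (2) each Γ[Y] is δ-hyperbolic (every geodesic triangle of Γ[Y] is δ-slim with respect to d_{Γ[Y]}); and (3) for every geodesic triangle of Γ, i.e. every triple of geodesic walks of Γ joining x to y, y to z, and z to x for some vertices x, y, z, there exists Y ∈ 𝒴 containing all vertices of the three walks. Then Γ is δ-hyperbolic: every geodesic triangle of Γ is δ-slim with respect to d_Γ. -/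
/-- A walk is geodesic if its length equals the graph distance between its endpoints. -/
def SimpleGraph.IsGeodesicWalk {V : Type*} (G : SimpleGraph V) {u v : V}
    (W : G.Walk u v) : Prop :=
  W.length = G.dist u v

/-- A triple of walks joining `x` to `y`, `y` to `z`, and `z` to `x` is `δ`-slim if every
vertex on one of the walks is within graph distance `δ` of the set of vertices on the union
of the other two walks. -/
def SimpleGraph.IsSlimTriangle {V : Type*} (G : SimpleGraph V) (δ : ℕ) {x y z : V}
    (W₁ : G.Walk x y) (W₂ : G.Walk y z) (W₃ : G.Walk z x) : Prop :=
  (∀ p ∈ W₁.support, ∃ q, (q ∈ W₂.support ∨ q ∈ W₃.support) ∧ G.dist p q ≤ δ) ∧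
  (∀ p ∈ W₂.support, ∃ q, (q ∈ W₁.support ∨ q ∈ W₃.support) ∧ G.dist p q ≤ δ) ∧
  (∀ p ∈ W₃.support, ∃ q, (q ∈ W₁.support ∨ q ∈ W₂.support) ∧ G.dist p q ≤ δ)

/-- A graph is `δ`-hyperbolic if every geodesic triangle is `δ`-slim. -/
def SimpleGraph.IsHyperbolic {V : Type*} (G : SimpleGraph V) (δ : ℕ) : Prop :=
  ∀ {x y z : V} (W₁ : G.Walk x y) (W₂ : G.Walk y z) (W₃ : G.Walk z x),
    G.IsGeodesicWalk W₁ → G.IsGeodesicWalk W₂ → G.IsGeodesicWalk W₃ →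
      G.IsSlimTriangle δ W₁ W₂ W₃

/-!
A graph homomorphism does not increase distances between vertices joined by a walk. Hence a walk
with geodesic image is geodesic, and the image of a slim triangle is slim. A geodesic triangle
of `Γ` contained in `Y` is the image of its restriction to `Γ[Y]`, so its sides are geodesic
in `Γ[Y]`, hyperbolicity makes the restriction slim, and slimness passes back to `Γ`. In the last
step no distance is the junk value `0`, since the vertices of a triangle lie in one component.
-/

section

open SimpleGraph

variable {V V' : Type*} {G : SimpleGraph V} {G' : SimpleGraph V'}

theorem dist_map_le_of_reachable (f : G →g G') {u v : V} (h : G.Reachable u v) :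
    G'.dist (f u) (f v) ≤ G.dist u v := by
  obtain ⟨W, hW⟩ := h.exists_walk_length_eq_dist
  calc
    G'.dist (f u) (f v) ≤ (W.map f).length := dist_le _
    _ = W.length := W.length_map f
    _ = G.dist u v := hW

theorem isGeodesicWalk_of_map (f : G →g G') {u v : V} {W : G.Walk u v}
    (h : G'.IsGeodesicWalk (W.map f)) : G.IsGeodesicWalk W := by
  refine le_antisymm ?_ (dist_le W)
  calc
    W.length = (W.map f).length := (W.length_map f).symm
    _ = G'.dist (f u) (f v) := h
    _ ≤ G.dist u v := dist_map_le_of_reachable f W.reachable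

theorem isGeodesicWalk_induce {Y : Set V} {u v : V} {W : G.Walk u v}
    (h : G.IsGeodesicWalk W) (hY : ∀ p ∈ W.support, p ∈ Y) :
    (G.induce Y).IsGeodesicWalk (W.induce Y hY) := by
  apply isGeodesicWalk_of_map (Embedding.induce Y).toHom
  rw [W.map_induce hY]
  exact h

theorem reachable_of_mem_support_of_mem_support {u v p q : V} {W : G.Walk u v}
    (hp : p ∈ W.support) (hq : q ∈ W.support) : G.Reachable p q := by
  classical
  exact (W.takeUntil p hp).reachable.symm.trans (W.takeUntil q hq).reachable

theorem isSlimTriangle_map (f : G →g G') {δ : ℕ} {x y z : V}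
    {W₁ : G.Walk x y} {W₂ : G.Walk y z} {W₃ : G.Walk z x} (h : G.IsSlimTriangle δ W₁ W₂ W₃) :
    G'.IsSlimTriangle δ (W₁.map f) (W₂.map f) (W₃.map f) := by
  obtain ⟨slim₁, slim₂, slim₃⟩ := h
  let boundary : G.Walk x x := (W₁.append W₂).append W₃
  have dist_map_le {p q : V} (hp : p ∈ boundary.support) (hq : q ∈ boundary.support)
      (hpq : G.dist p q ≤ δ) : G'.dist (f p) (f q) ≤ δ :=
    (dist_map_le_of_reachable f (reachable_of_mem_support_of_mem_support hp hq)).trans hpq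
  simp only [boundary, Walk.mem_support_append_iff] at dist_map_le
  simp only [IsSlimTriangle, Walk.support_map, List.forall_mem_map]
  refine ⟨fun p hp => ?_, fun p hp => ?_, fun p hp => ?_⟩
  · obtain ⟨q, hq, hpq⟩ := slim₁ p hp
    exact ⟨f q, hq.imp List.mem_map_of_mem List.mem_map_of_mem,
      dist_map_le (by tauto) (by tauto) hpq⟩
  · obtain ⟨q, hq, hpq⟩ := slim₂ p hp
    exact ⟨f q, hq.imp List.mem_map_of_mem List.mem_map_of_mem,
      dist_map_le (by tauto) (by tauto) hpq⟩
  · obtain ⟨q, hq, hpq⟩ := slim₃ p hp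
    exact ⟨f q, hq.imp List.mem_map_of_mem List.mem_map_of_mem,
      dist_map_le (by tauto) (by tauto) hpq⟩

theorem isSlimTriangle_of_induce {Y : Set V} {δ : ℕ} {x y z : V}
    {W₁ : G.Walk x y} {W₂ : G.Walk y z} {W₃ : G.Walk z x}
    (hY₁ : ∀ p ∈ W₁.support, p ∈ Y) (hY₂ : ∀ p ∈ W₂.support, p ∈ Y)
    (hY₃ : ∀ p ∈ W₃.support, p ∈ Y)
    (h : (G.induce Y).IsSlimTriangle δ (W₁.induce Y hY₁) (W₂.induce Y hY₂) (W₃.induce Y hY₃)) :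
    G.IsSlimTriangle δ W₁ W₂ W₃ := by
  have slim_map := isSlimTriangle_map (Embedding.induce Y).toHom h
  rwa [W₁.map_induce hY₁, W₂.map_induce hY₂, W₃.map_induce hY₃] at slim_map

theorem hyperbolic_cover_implies_hyperbolic_general {δ : ℕ} (𝒴 : Set (Set V))
    (hyperbolic : ∀ Y ∈ 𝒴, (G.induce Y).IsHyperbolic δ)
    (cover : ∀ (x y z : V) (W₁ : G.Walk x y) (W₂ : G.Walk y z) (W₃ : G.Walk z x),
      G.IsGeodesicWalk W₁ → G.IsGeodesicWalk W₂ → G.IsGeodesicWalk W₃ →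
        ∃ Y ∈ 𝒴, (∀ p ∈ W₁.support, p ∈ Y) ∧ (∀ p ∈ W₂.support, p ∈ Y) ∧
          (∀ p ∈ W₃.support, p ∈ Y)) :
    G.IsHyperbolic δ := by
  intro x y z W₁ W₂ W₃ geod₁ geod₂ geod₃
  obtain ⟨Y, hY, hY₁, hY₂, hY₃⟩ := cover x y z W₁ W₂ W₃ geod₁ geod₂ geod₃
  exact isSlimTriangle_of_induce hY₁ hY₂ hY₃ <| hyperbolic Y hY _ _ _
    (isGeodesicWalk_induce geod₁ hY₁) (isGeodesicWalk_induce geod₂ hY₂)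
    (isGeodesicWalk_induce geod₃ hY₃)

end

/-- Graph form of Lemma 5.5: a connected graph admitting a `δ`-hyperbolic cover (a family of
subsets with connected, `δ`-hyperbolic induced subgraphs such that every geodesic triangle is
contained in some member) is itself `δ`-hyperbolic. -/
theorem hyperbolic_cover_implies_hyperbolic {X : Type*} (Γ : SimpleGraph X)
    (hconn : Γ.Connected) (δ : ℕ) (𝒴 : Set (Set X))
    (h1 : ∀ Y ∈ 𝒴, (Γ.induce Y).Connected)
    (h2 : ∀ Y ∈ 𝒴, (Γ.induce Y).IsHyperbolic δ)
    (h3 : ∀ (x y z : X) (W₁ : Γ.Walk x y) (W₂ : Γ.Walk y z) (W₃ : Γ.Walk z x),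
      Γ.IsGeodesicWalk W₁ → Γ.IsGeodesicWalk W₂ → Γ.IsGeodesicWalk W₃ →
        ∃ Y ∈ 𝒴, (∀ p ∈ W₁.support, p ∈ Y) ∧ (∀ p ∈ W₂.support, p ∈ Y) ∧
          (∀ p ∈ W₃.support, p ∈ Y)) :
    Γ.IsHyperbolic δ :=
  hyperbolic_cover_implies_hyperbolic_general 𝒴 h2 h3
end

section
/- Let Γ be a connected simple graph on a vertex type X and let A, B ∈ ℕ. Let 𝒴 be a family of subsets of X covering X such that: (1) for each Y ∈ 𝒴 the induced subgraph Γ[Y] is connected; (2) for each Y ∈ 𝒴 there exists an (A,B)-quasi-retract of Γ onto Y (a map r assigning to each x ∈ X a nonempty subset r(x) ⊆ Y with d_{Γ[Y]}-diameter at most A, such that whenever x = x' or x and x' are adjacent in Γ there exist p ∈ r(x), q ∈ r(x') with d_{Γ[Y]}(p,q) ≤ B, and such that r(y) = {y} for every y ∈ Y); and (3) for every geodesic triangle of Γ there exists Y ∈ 𝒴 containing all vertices of its three walks. Then Γ is Gromov hyperbolic (δ-hyperbolic for some δ ∈ ℕ) if and only if there exists δ ∈ ℕ such that every induced subgraph Γ[Y]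 for Y ∈ 𝒴 is δ-hyperbolic. -/
/-- An `(A,B)`-quasi-retract of `Γ` onto a subset `Y`. -/
def SimpleGraph.IsQuasiRetract {X : Type*} (Γ : SimpleGraph X) (Y : Set X)
    (A B : ℕ) (r : X → Set Y) : Prop :=
  (∀ x : X, (r x).Nonempty) ∧
  (∀ x : X, ∀ p ∈ r x, ∀ q ∈ r x, (Γ.induce Y).dist p q ≤ A) ∧
  (∀ x x' : X, (x = x' ∨ Γ.Adj x x') →
    ∃ p ∈ r x, ∃ q ∈ r x', (Γ.induce Y).dist p q ≤ B) ∧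
  (∀ y : Y, r (y : X) = {y})

/-!
Distances inside an induced subgraph dominate ambient distances, so a triangle which is slim in a
member of the cover is slim in `Γ`; a geodesic triangle of `Γ` stays geodesic in the member that
contains it. Conversely, pushing a walk through a quasi-retract shows that each member is embedded
with linear distortion, so its geodesics are quasigeodesics of `Γ`. By the Morse lemma these fellow
travel with geodesics of `Γ`, hence triangles of quasigeodesics are uniformly slim in `Γ`, and,
distortion being linear, also in the member.

The Morse lemma rests on two facts about a `δ`-slim graph: a geodesic is within `δ n + 1` of any
walk of length at most `2 ^ n` with the same endpoints (bisect the walk), and if `D` is the maximal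
distance from the geodesic to a `K`-quasigeodesic, attained at `x`, then a detour around `x` which
follows the quasigeodesic for a length of at most `6 K D` bounds `D` by a logarithm of `D`.
-/

namespace GraphHyperbolicity

open SimpleGraph

section Interval

variable {V : Type*} {G : SimpleGraph V} {u v x y z : V}

/-- The interval between `u` and `v`: in a connected graph, the vertices lying on some geodesic
from `u` to `v`. -/
def interval (G : SimpleGraph V) (u v : V) : Set V :=
  {x | G.dist u x + G.dist x v = G.dist u v}

lemma mem_interval : x ∈ interval G u v ↔ G.dist u x + G.dist x v = G.dist u v :=
  Iff.rfl

lemma left_mem_interval : u ∈ interval G u v := by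
  simp [interval]

lemma right_mem_interval : v ∈ interval G u v := by
  simp [interval]

lemma interval_comm (u v : V) : interval G u v = interval G v u := by
  ext x
  rw [mem_interval, mem_interval, add_comm, G.dist_comm (u := v), G.dist_comm (u := x) (v := u),
    G.dist_comm (u := v)]

lemma interval_self (hG : G.Connected) (u : V) : interval G u u = {u} := by
  ext x
  simp [interval, hG.dist_eq_zero_iff, eq_comm]

lemma interval_subset_left (hG : G.Connected) (hx : x ∈ interval G u v) :
    interval G u x ⊆ interval G u v := by
  intro y hy
  have := hG.dist_triangle (u := u) (v := y) (w := v)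
  have := hG.dist_triangle (u := y) (v := x) (w := v)
  simp only [mem_interval] at *
  omega

lemma mem_interval_of_mem_of_mem (hG : G.Connected) (hx : x ∈ interval G u v)
    (hy : y ∈ interval G u x) (hz : z ∈ interval G x v) : x ∈ interval G y z := by
  have := hG.dist_triangle (u := y) (v := x) (w := z)
  have := hG.dist_triangle (u := u) (v := y) (w := v)
  have := hG.dist_triangle (u := y) (v := z) (w := v)
  simp only [mem_interval] at *
  omega

lemma support_subset_interval (hG : G.Connected) {p : G.Walk u v} (hp : G.IsGeodesicWalk p) :
    {w | w ∈ p.support} ⊆ interval G u v := by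
  intro w hw
  obtain ⟨q, r, rfl⟩ := Walk.mem_support_iff_exists_append.1 hw
  have := dist_le q
  have := dist_le r
  have := hG.dist_triangle (u := u) (v := w) (w := v)
  rw [IsGeodesicWalk, Walk.length_append] at hp
  rw [mem_interval]
  omega

lemma exists_geodesicWalk_of_mem_interval (hG : G.Connected) (hx : x ∈ interval G u v) :
    ∃ p : G.Walk u v, G.IsGeodesicWalk p ∧ x ∈ p.support := by
  obtain ⟨q, hq⟩ := hG.exists_walk_length_eq_dist u x
  obtain ⟨r, hr⟩ := hG.exists_walk_length_eq_dist x v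
  refine ⟨q.append r, ?_, by simp⟩
  rw [IsGeodesicWalk, Walk.length_append, hq, hr]
  exact hx

lemma exists_mem_interval_dist_eq (hG : G.Connected) {t : ℕ} (ht : t ≤ G.dist u v) :
    ∃ y ∈ interval G u v, G.dist y v = t := by
  obtain ⟨p, hp⟩ := hG.exists_walk_length_eq_dist u v
  have hmem := support_subset_interval hG hp (p.getVert_mem_support (G.dist u v - t))
  have hleft := length_eq_dist_of_subwalk hp (p.isSubwalk_take (G.dist u v - t))
  rw [Walk.take_length, hp] at hleft
  refine ⟨_, hmem, ?_⟩
  rw [mem_interval] at hmem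
  omega

end Interval

section Thickening

variable {V : Type*} {G : SimpleGraph V} {r s : ℕ} {S T : Set V}

/-- The closed `r`-neighbourhood of a set of vertices. -/
def thickening (G : SimpleGraph V) (r : ℕ) (S : Set V) : Set V :=
  {x | ∃ y ∈ S, G.dist x y ≤ r}

lemma thickening_mono (h : S ⊆ T) : thickening G r S ⊆ thickening G r T :=
  fun _ ⟨y, hy, hxy⟩ ↦ ⟨y, h hy, hxy⟩

lemma thickening_mono_radius (h : r ≤ s) : thickening G r S ⊆ thickening G s S :=
  fun _ ⟨y, hy, hxy⟩ ↦ ⟨y, hy, hxy.trans h⟩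

lemma thickening_thickening_subset (hG : G.Connected) :
    thickening G r (thickening G s S) ⊆ thickening G (r + s) S :=
  fun _ ⟨_, ⟨z, hz, hyz⟩, hxy⟩ ↦ ⟨z, hz, hG.dist_triangle.trans (add_le_add hxy hyz)⟩

lemma subset_thickening : S ⊆ thickening G r S :=
  fun x hx ↦ ⟨x, hx, by simp⟩

lemma exists_subset_thickening_and_le_dist (hS : S.Nonempty) (h : S ⊆ thickening G r T) :
    ∃ D, S ⊆ thickening G D T ∧ ∃ x ∈ S, ∀ y ∈ T, D ≤ G.dist x y := by
  classical
  have hex : ∃ D, S ⊆ thickening G D T := ⟨r, h⟩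
  refine ⟨Nat.find hex, Nat.find_spec hex, ?_⟩
  obtain hzero | hpos := (Nat.find hex).eq_zero_or_pos
  · obtain ⟨x, hx⟩ := hS
    exact ⟨x, hx, by simp [hzero]⟩
  · obtain ⟨x, hx, hfar⟩ := Set.not_subset.1 (Nat.find_min hex (Nat.pred_lt hpos.ne'))
    refine ⟨x, hx, fun y hy ↦ ?_⟩
    by_contra! hlt
    exact hfar ⟨y, hy, Nat.le_pred_of_lt hlt⟩

end Thickening

section SlimIntervals

variable {V : Type*} {G : SimpleGraph V} {δ : ℕ} {u v x : V}

/-- Slimness of geodesic triangles in terms of intervals, which avoids choosing the sides: each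
point between two vertices is `δ`-close to some point between one of them and a given third one. -/
def HasSlimIntervals (G : SimpleGraph V) (δ : ℕ) : Prop :=
  ∀ x y z, interval G x y ⊆ thickening G δ (interval G x z ∪ interval G z y)

lemma hasSlimIntervals_of_isHyperbolic (hG : G.Connected) (h : G.IsHyperbolic δ) :
    HasSlimIntervals G δ := by
  intro x y z p hp
  obtain ⟨W₁, hW₁, hpW₁⟩ := exists_geodesicWalk_of_mem_interval hG hp
  obtain ⟨W₂, hW₂⟩ := hG.exists_walk_length_eq_dist y z
  obtain ⟨W₃, hW₃⟩ := hG.exists_walk_length_eq_dist z x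
  obtain ⟨q, hq, hpq⟩ := (h W₁ W₂ W₃ hW₁ hW₂ hW₃).1 p hpW₁
  rw [interval_comm x z, interval_comm z y]
  exact ⟨q, hq.symm.imp (support_subset_interval hG hW₃ ·) (support_subset_interval hG hW₂ ·), hpq⟩

lemma interval_subset_thickening_quadrilateral (hG : G.Connected) (hs : HasSlimIntervals G δ)
    (y z a b : V) : interval G y z ⊆
      thickening G (δ + δ) (interval G y a ∪ (interval G a b ∪ interval G b z)) :=
  calc interval G y z
    _ ⊆ thickening G δ (interval G y a ∪ interval G a z) := hs y z a
    _ ⊆ thickening G δ (thickening G δ (interval G y a ∪ (interval G a b ∪ interval G b z))) :=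
        thickening_mono <| Set.union_subset
          (Set.subset_union_left.trans subset_thickening)
          ((hs a z b).trans (thickening_mono Set.subset_union_right))
    _ ⊆ _ := thickening_thickening_subset hG

lemma interval_subset_thickening_support_of_length_le (hG : G.Connected)
    (hs : HasSlimIntervals G δ) {n : ℕ} (p : G.Walk u v) (hp : p.length ≤ 2 ^ n) :
    interval G u v ⊆ thickening G (δ * n + 1) {w | w ∈ p.support} := by
  induction n generalizing u v with
  | zero =>
    intro x hx
    have := dist_le p
    rw [mem_interval, G.dist_comm (u := u) (v := x)] at hx
    exact ⟨u, p.start_mem_support, by omega⟩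
  | succ n ih =>
    have htake := ih (p.take (2 ^ n)) (by rw [Walk.take_length]; omega)
    have hdrop := ih (p.drop (2 ^ n)) (by rw [Walk.drop_length]; omega)
    calc interval G u v
      _ ⊆ thickening G δ _ := hs u v (p.getVert (2 ^ n))
      _ ⊆ thickening G δ (thickening G (δ * n + 1) {w | w ∈ p.support}) :=
          thickening_mono <| Set.union_subset
            (htake.trans (thickening_mono (p.isSubwalk_take _).support_subset))
            (hdrop.trans (thickening_mono (p.isSubwalk_drop _).support_subset))
      _ ⊆ thickening G (δ + (δ * n + 1)) {w | w ∈ p.support} := thickening_thickening_subset hG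
      _ = thickening G (δ * (n + 1) + 1) {w | w ∈ p.support} := by ring_nf

end SlimIntervals

section Quasigeodesic

variable {V : Type*} {G : SimpleGraph V} {K : ℕ} {u v a b : V} {p : G.Walk u v}

/-- A walk is a `K`-quasigeodesic if the length of each of its segments is at most `K` times the
distance between the endpoints of the segment. Only segments within the walk matter, since
`getVert` is constant beyond the end. -/
def IsQuasigeodesic (K : ℕ) (p : G.Walk u v) : Prop :=
  ∀ i j, i ≤ j → j ≤ p.length → j - i ≤ K * G.dist (p.getVert i) (p.getVert j)

lemma exists_isSubwalk_length_eq {i j : ℕ} (hij : i ≤ j) (hj : j ≤ p.length) :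
    ∃ q : G.Walk (p.getVert i) (p.getVert j), q.IsSubwalk p ∧ q.length = j - i := by
  refine ⟨((p.drop i).take (j - i)).copy rfl (by simp [hij]), ?_, ?_⟩
  · exact (((p.drop i).isSubwalk_take _).trans (p.isSubwalk_drop i)).copy
      rfl (by simp [hij]) rfl rfl
  · rw [Walk.length_copy, Walk.take_length, Walk.drop_length]
    omega

lemma IsQuasigeodesic.exists_walk_length_le (hp : IsQuasigeodesic K p) (ha : a ∈ p.support)
    (hb : b ∈ p.support) :
    ∃ q : G.Walk a b, q.support ⊆ p.support ∧ q.length ≤ K * G.dist a b := by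
  obtain ⟨i, rfl, hi⟩ := Walk.mem_support_iff_exists_getVert.1 ha
  obtain ⟨j, rfl, hj⟩ := Walk.mem_support_iff_exists_getVert.1 hb
  obtain hij | hji := le_total i j
  · obtain ⟨q, hqp, hq⟩ := exists_isSubwalk_length_eq hij hj
    exact ⟨q, hqp.support_subset, hq.trans_le (hp i j hij hj)⟩
  · obtain ⟨q, hqp, hq⟩ := exists_isSubwalk_length_eq hji hi
    refine ⟨q.reverse, by simpa using hqp.support_subset, ?_⟩
    rw [Walk.length_reverse, hq, G.dist_comm]
    exact hp j i hji hi

end Quasigeodesic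

section Morse

variable {V : Type*} {G : SimpleGraph V} {δ K : ℕ} {u v x : V}

/-- A bound for the numbers `D` with `D ≤ a * log₂ (c * D) + b`. The value comes from estimating the
logarithm by `c + 2 * √D`. -/
def logBound (a b c : ℕ) : ℕ :=
  a * (c + 2 * (2 * a + a * c + b)) + b

lemma le_logBound {a b c D : ℕ} (h : ∀ n, c * D ≤ 2 ^ n → D ≤ a * n + b) :
    D ≤ logBound a b c := by
  have hsqrt : D ≤ 2 ^ (2 * D.sqrt) := calc
    D ≤ (D.sqrt + 1) * (D.sqrt + 1) := D.lt_succ_sqrt.le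
    _ ≤ 2 ^ D.sqrt * 2 ^ D.sqrt := Nat.mul_le_mul Nat.lt_two_pow_self Nat.lt_two_pow_self
    _ = 2 ^ (2 * D.sqrt) := by rw [← pow_add, two_mul]
  have hD : D ≤ a * (c + 2 * D.sqrt) + b := h _ <| calc
    c * D ≤ 2 ^ c * 2 ^ (2 * D.sqrt) := Nat.mul_le_mul Nat.lt_two_pow_self.le hsqrt
    _ = 2 ^ (c + 2 * D.sqrt) := (pow_add ..).symm
  have hroot : D.sqrt ≤ 2 * a + a * c + b := by
    by_contra! hlt
    nlinarith [D.sqrt_le, Nat.zero_le (a * c + b)]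
  exact hD.trans (by unfold logBound; gcongr)

/-- The radius of the neighbourhood of a `K`-quasigeodesic containing the geodesics between its
endpoints. -/
def morseRadius (δ K : ℕ) : ℕ :=
  logBound δ (δ + δ + 1) (6 * K)

/-- The radius of the neighbourhood of an interval containing the `K`-quasigeodesics between its
endpoints. -/
def quasigeodesicRadius (δ K : ℕ) : ℕ :=
  K * (2 * morseRadius δ K + 1) + morseRadius δ K

-- If `u` is at distance more than `2 * D` from `x`, then `y` is taken at distance `2 * D` from `x`.
lemma exists_detour_of_le_dist (hG : G.Connected) {S : Set V} {D : ℕ} (hu : u ∈ S)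
    (hx : x ∈ interval G u v) (hnear : interval G u v ⊆ thickening G D S)
    (hfar : ∀ s ∈ S, D ≤ G.dist x s) :
    ∃ y ∈ interval G u x, ∃ s ∈ S, G.dist y x ≤ 2 * D ∧ G.dist y s ≤ D ∧
      ∀ w ∈ interval G y s, D ≤ G.dist x w := by
  obtain hle | hlt := le_or_gt (G.dist u x) (2 * D)
  · refine ⟨u, left_mem_interval, u, hu, hle, by simp, fun w hw ↦ ?_⟩
    rw [interval_self hG, Set.mem_singleton_iff] at hw
    exact hw ▸ hfar u hu
  · obtain ⟨y, hy, hyx⟩ := exists_mem_interval_dist_eq hG hlt.le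
    obtain ⟨s, hs, hys⟩ := hnear (interval_subset_left hG hx hy)
    refine ⟨y, hy, s, hs, hyx.le, hys, fun w hw ↦ ?_⟩
    have := hG.dist_triangle (u := y) (v := w) (w := x)
    rw [G.dist_comm (u := w)] at this
    rw [mem_interval] at hw
    omega

theorem interval_subset_thickening_support (hG : G.Connected) (hs : HasSlimIntervals G δ)
    {p : G.Walk u v} (hp : IsQuasigeodesic K p) :
    interval G u v ⊆ thickening G (morseRadius δ K) {w | w ∈ p.support} := by
  have hend : interval G u v ⊆ thickening G (G.dist u v) {w | w ∈ p.support} :=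
    fun x hx ↦ ⟨v, p.end_mem_support, (Nat.le_add_left _ _).trans_eq hx⟩
  obtain ⟨D, hnear, x, hx, hfar⟩ :=
    exists_subset_thickening_and_le_dist ⟨u, left_mem_interval⟩ hend
  refine hnear.trans (thickening_mono_radius (le_logBound fun n hn ↦ ?_))
  obtain ⟨y, hy, a, ha, hyx, hya, hfar_ya⟩ :=
    exists_detour_of_le_dist hG p.start_mem_support hx hnear hfar
  rw [interval_comm] at hx hnear
  obtain ⟨z, hz, b, hb, hzx, hzb, hfar_zb⟩ :=
    exists_detour_of_le_dist hG p.end_mem_support hx hnear hfar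
  rw [interval_comm] at hx hz
  have hab : G.dist a b ≤ 6 * D := by
    have := hG.dist_triangle (u := a) (v := y) (w := b)
    have := hG.dist_triangle (u := y) (v := x) (w := b)
    have := hG.dist_triangle (u := x) (v := z) (w := b)
    rw [G.dist_comm] at hya hzx
    omega
  obtain ⟨q, hqp, hq⟩ := hp.exists_walk_length_le ha hb
  have hq_pow : q.length ≤ 2 ^ n := calc
    q.length ≤ K * (6 * D) := hq.trans (Nat.mul_le_mul_left K hab)
    _ = 6 * K * D := by ring
    _ ≤ 2 ^ n := hn
  obtain ⟨t, ht | ht | ht, hxt⟩ := interval_subset_thickening_quadrilateral hG hs y z a b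
    (mem_interval_of_mem_of_mem hG hx hy hz)
  · have := hfar_ya t ht
    omega
  · obtain ⟨w, hw, htw⟩ := interval_subset_thickening_support_of_length_le hG hs q hq_pow ht
    have := hfar w (hqp hw)
    have := hG.dist_triangle (u := x) (v := t) (w := w)
    omega
  · have := hfar_zb t (interval_comm b z ▸ ht)
    omega

-- Walking along a geodesic, consider the first step leaving the neighbourhood of the initial part.
lemma exists_mem_interval_near_both_parts (hG : G.Connected) {p : G.Walk u v} {R i : ℕ}
    (h : interval G u v ⊆ thickening G R {w | w ∈ p.support}) (hi : i ≤ p.length) :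
    ∃ x ∈ interval G u v, (∃ j ≤ i, G.dist x (p.getVert j) ≤ R + 1) ∧
      ∃ k, i ≤ k ∧ k ≤ p.length ∧ G.dist x (p.getVert k) ≤ R := by
  let S : Set V := {x | ∃ j ≤ i, G.dist x (p.getVert j) ≤ R}
  have hu : u ∈ S := ⟨0, i.zero_le, by simp⟩
  by_cases hv : v ∈ S
  · obtain ⟨j, hji, hvj⟩ := hv
    exact ⟨v, right_mem_interval, ⟨j, hji, by omega⟩, p.length, hi, le_rfl, by simp⟩
  obtain ⟨γ, hγ⟩ := hG.exists_walk_length_eq_dist u v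
  obtain ⟨d, hd, ⟨j, hji, hj⟩, hsnd⟩ := γ.exists_boundary_dart S hu hv
  have hmem : d.snd ∈ interval G u v :=
    support_subset_interval hG hγ (γ.dart_snd_mem_support_of_mem_darts hd)
  refine ⟨d.snd, hmem, ⟨j, hji, ?_⟩, ?_⟩
  · have := hG.dist_triangle (u := d.snd) (v := d.fst) (w := p.getVert j)
    have := dist_eq_one_iff_adj.2 d.adj.symm
    omega
  · obtain ⟨w, hw, hdw⟩ := h hmem
    obtain ⟨k, rfl, hk⟩ := Walk.mem_support_iff_exists_getVert.1 hw
    exact ⟨k, le_of_not_ge fun hki ↦ hsnd ⟨k, hki, hdw⟩, hk, hdw⟩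

theorem support_subset_thickening_interval (hG : G.Connected) (hs : HasSlimIntervals G δ)
    {p : G.Walk u v} (hp : IsQuasigeodesic K p) :
    {w | w ∈ p.support} ⊆ thickening G (quasigeodesicRadius δ K) (interval G u v) := by
  intro w hw
  obtain ⟨i, rfl, hi⟩ := Walk.mem_support_iff_exists_getVert.1 hw
  obtain ⟨x, hx, ⟨j, hji, hxj⟩, k, hik, hk, hxk⟩ := exists_mem_interval_near_both_parts hG
    (interval_subset_thickening_support hG hs hp) hi
  obtain ⟨q, -, hq⟩ := exists_isSubwalk_length_eq hik hk
  have hjk : G.dist (p.getVert j) (p.getVert k) ≤ 2 * morseRadius δ K + 1 := by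
    have := hG.dist_triangle (u := p.getVert j) (v := x) (w := p.getVert k)
    rw [G.dist_comm] at hxj
    omega
  rw [G.dist_comm] at hxk
  refine ⟨x, hx, ?_⟩
  calc G.dist (p.getVert i) x
    _ ≤ G.dist (p.getVert i) (p.getVert k) + G.dist (p.getVert k) x := hG.dist_triangle
    _ ≤ (k - j) + morseRadius δ K := by
        have := dist_le q
        omega
    _ ≤ K * (2 * morseRadius δ K + 1) + morseRadius δ K := by
        have := (hp j k (hji.trans hik) hk).trans (Nat.mul_le_mul_left K hjk)
        omega

theorem support_subset_thickening_of_isQuasigeodesic_triangle (hG : G.Connected)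
    (hs : HasSlimIntervals G δ) {x y z : V} {W₁ : G.Walk x y} {W₂ : G.Walk y z} {W₃ : G.Walk z x}
    (h₁ : IsQuasigeodesic K W₁) (h₂ : IsQuasigeodesic K W₂) (h₃ : IsQuasigeodesic K W₃) :
    {w | w ∈ W₁.support} ⊆ thickening G (quasigeodesicRadius δ K + (δ + morseRadius δ K))
      {w | w ∈ W₂.support ∨ w ∈ W₃.support} := by
  have hinterval : interval G x z ∪ interval G z y ⊆
      thickening G (morseRadius δ K) {w | w ∈ W₂.support ∨ w ∈ W₃.support} := by
    rw [interval_comm x z, interval_comm z y]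
    exact Set.union_subset
      ((interval_subset_thickening_support hG hs h₃).trans (thickening_mono fun _ ↦ Or.inr))
      ((interval_subset_thickening_support hG hs h₂).trans (thickening_mono fun _ ↦ Or.inl))
  calc {w | w ∈ W₁.support}
    _ ⊆ thickening G _ (interval G x y) := support_subset_thickening_interval hG hs h₁
    _ ⊆ thickening G _ (thickening G _ (thickening G _ _)) :=
        thickening_mono ((hs x y z).trans (thickening_mono hinterval))
    _ ⊆ thickening G _ (thickening G _ _) := thickening_mono (thickening_thickening_subset hG)
    _ ⊆ _ := thickening_thickening_subset hG

end Morse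

section Hom

variable {V V' : Type*} {G : SimpleGraph V} {H : SimpleGraph V'} {φ : H →g G} {δ K : ℕ}
  {x y z : V'}

lemma isHyperbolic_of_forall_side
    (h : ∀ {x y z : V} (W₁ : G.Walk x y) (W₂ : G.Walk y z) (W₃ : G.Walk z x),
      G.IsGeodesicWalk W₁ → G.IsGeodesicWalk W₂ → G.IsGeodesicWalk W₃ →
        ∀ p ∈ W₁.support, ∃ q, (q ∈ W₂.support ∨ q ∈ W₃.support) ∧ G.dist p q ≤ δ) :
    G.IsHyperbolic δ := by
  intro x y z W₁ W₂ W₃ h₁ h₂ h₃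
  refine ⟨h W₁ W₂ W₃ h₁ h₂ h₃, ?_, h W₃ W₁ W₂ h₃ h₁ h₂⟩
  simpa only [or_comm] using h W₂ W₃ W₁ h₂ h₃ h₁

lemma dist_map_le (φ : H →g G) (h : H.Reachable x y) : G.dist (φ x) (φ y) ≤ H.dist x y := by
  obtain ⟨p, hp⟩ := h.exists_walk_length_eq_dist
  rw [← hp, ← p.length_map φ]
  exact dist_le _

lemma isGeodesicWalk_of_map {p : H.Walk x y} (hp : G.IsGeodesicWalk (p.map φ)) :
    H.IsGeodesicWalk p := by
  rw [IsGeodesicWalk, Walk.length_map] at hp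
  exact le_antisymm (hp.trans_le (dist_map_le φ p.reachable)) (dist_le p)

lemma isSlimTriangle_map (hH : H.Connected) {W₁ : H.Walk x y} {W₂ : H.Walk y z} {W₃ : H.Walk z x}
    (h : H.IsSlimTriangle δ W₁ W₂ W₃) :
    G.IsSlimTriangle δ (W₁.map φ) (W₂.map φ) (W₃.map φ) := by
  have hside {S T U : List V'} (h : ∀ p ∈ S, ∃ q, (q ∈ T ∨ q ∈ U) ∧ H.dist p q ≤ δ) :
      ∀ p ∈ S.map φ, ∃ q, (q ∈ T.map φ ∨ q ∈ U.map φ) ∧ G.dist p q ≤ δ := by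
    simp only [List.forall_mem_map]
    intro p hp
    obtain ⟨q, hq, hpq⟩ := h p hp
    exact ⟨φ q, hq.imp List.mem_map_of_mem List.mem_map_of_mem, (dist_map_le φ (hH p q)).trans hpq⟩
  simp only [IsSlimTriangle, Walk.support_map]
  exact h.imp hside (And.imp hside hside)

lemma isQuasigeodesic_map (hφ : ∀ p q, H.dist p q ≤ K * G.dist (φ p) (φ q)) {p : H.Walk x y}
    (hp : H.IsGeodesicWalk p) : IsQuasigeodesic K (p.map φ) := by
  intro i j hij hj
  rw [Walk.length_map] at hj
  obtain ⟨q, hqp, hq⟩ := exists_isSubwalk_length_eq hij hj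
  rw [← hq, length_eq_dist_of_subwalk hp hqp, Walk.getVert_map, Walk.getVert_map]
  exact hφ _ _

theorem isHyperbolic_of_dist_le_mul_dist_map (hG : G.Connected) (hδ : G.IsHyperbolic δ)
    (hφ : ∀ p q, H.dist p q ≤ K * G.dist (φ p) (φ q)) :
    H.IsHyperbolic (K * (quasigeodesicRadius δ K + (δ + morseRadius δ K))) := by
  refine isHyperbolic_of_forall_side fun W₁ W₂ W₃ h₁ h₂ h₃ p hp ↦ ?_
  have hslim := support_subset_thickening_of_isQuasigeodesic_triangle hG
    (hasSlimIntervals_of_isHyperbolic hG hδ) (isQuasigeodesic_map hφ h₁)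
    (isQuasigeodesic_map hφ h₂) (isQuasigeodesic_map hφ h₃)
  simp only [Walk.support_map, List.mem_map, ← exists_or, ← or_and_right] at hslim
  obtain ⟨_, ⟨q, hq, rfl⟩, hpq⟩ := hslim ⟨p, hp, rfl⟩
  exact ⟨q, hq, (hφ p q).trans (Nat.mul_le_mul_left K hpq)⟩

end Hom

section QuasiRetract

variable {X : Type*} {Γ : SimpleGraph X} {Y : Set X} {A B : ℕ} {r : X → Set Y}

lemma exists_dist_le_of_isQuasiRetract (hY : (Γ.induce Y).Connected)
    (hr : Γ.IsQuasiRetract Y A B r) {x x' : X} (W : Γ.Walk x x') {p : Y} (hp : p ∈ r x) :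
    ∃ q ∈ r x', (Γ.induce Y).dist p q ≤ (A + B) * W.length := by
  induction W generalizing p with
  | nil => exact ⟨p, hp, by simp⟩
  | cons hadj W ih =>
    obtain ⟨p', hp', q', hq', hpq'⟩ := hr.2.2.1 _ _ (Or.inr hadj)
    obtain ⟨q, hq, hqq'⟩ := ih hq'
    refine ⟨q, hq, ?_⟩
    calc (Γ.induce Y).dist p q
      _ ≤ (Γ.induce Y).dist p p' + (Γ.induce Y).dist p' q' + (Γ.induce Y).dist q' q :=
          hY.dist_triangle.trans (Nat.add_le_add_right hY.dist_triangle _)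
      _ ≤ A + B + (A + B) * W.length := by
          gcongr
          exact hr.2.1 _ p hp p' hp'
      _ = (A + B) * (W.cons hadj).length := by rw [Walk.length_cons]; ring

lemma dist_induce_le_of_isQuasiRetract (hΓ : Γ.Connected) (hY : (Γ.induce Y).Connected)
    (hr : Γ.IsQuasiRetract Y A B r) (p q : Y) :
    (Γ.induce Y).dist p q ≤ (A + B) * Γ.dist (p : X) q := by
  obtain ⟨W, hW⟩ := hΓ.exists_walk_length_eq_dist (p : X) q
  obtain ⟨q', hq', hpq'⟩ := exists_dist_le_of_isQuasiRetract hY hr W (p := p) (by simp [hr.2.2.2])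
  rw [hr.2.2.2, Set.mem_singleton_iff] at hq'
  rwa [hq', hW] at hpq'

end QuasiRetract

end GraphHyperbolicity

open GraphHyperbolicity SimpleGraph in
theorem hyperbolic_iff_uniform_hyperbolic_cover_general {X : Type*} {Γ : SimpleGraph X}
    (hΓ : Γ.Connected) {K : ℕ} {𝒴 : Set (Set X)}
    (hconn : ∀ Y ∈ 𝒴, (Γ.induce Y).Connected)
    (hdist : ∀ Y ∈ 𝒴, ∀ p q : Y, (Γ.induce Y).dist p q ≤ K * Γ.dist (p : X) q)
    (htriangle : ∀ (x y z : X) (W₁ : Γ.Walk x y) (W₂ : Γ.Walk y z) (W₃ : Γ.Walk z x),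
      Γ.IsGeodesicWalk W₁ → Γ.IsGeodesicWalk W₂ → Γ.IsGeodesicWalk W₃ →
        ∃ Y ∈ 𝒴, (∀ p ∈ W₁.support, p ∈ Y) ∧ (∀ p ∈ W₂.support, p ∈ Y) ∧
          (∀ p ∈ W₃.support, p ∈ Y)) :
    (∃ δ : ℕ, Γ.IsHyperbolic δ) ↔ ∃ δ : ℕ, ∀ Y ∈ 𝒴, (Γ.induce Y).IsHyperbolic δ := by
  constructor
  · rintro ⟨δ, hδ⟩
    exact ⟨_, fun Y hY ↦ isHyperbolic_of_dist_le_mul_dist_map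
      (φ := (Embedding.induce Y).toHom) hΓ hδ (hdist Y hY)⟩
  · rintro ⟨δ, hδ⟩
    refine ⟨δ, fun W₁ W₂ W₃ h₁ h₂ h₃ ↦ ?_⟩
    obtain ⟨Y, hY, hY₁, hY₂, hY₃⟩ := htriangle _ _ _ W₁ W₂ W₃ h₁ h₂ h₃
    rw [← W₁.map_induce hY₁] at h₁ ⊢
    rw [← W₂.map_induce hY₂] at h₂ ⊢
    rw [← W₃.map_induce hY₃] at h₃ ⊢
    exact isSlimTriangle_map (hconn Y hY) <| hδ Y hY _ _ _ (isGeodesicWalk_of_map h₁)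
      (isGeodesicWalk_of_map h₂) (isGeodesicWalk_of_map h₃)

/-- Graph form of Lemma 5.6: for a cover of a connected graph by uniform quasi-retracts
with connected induced subgraphs, containing all geodesic triangles, the graph is Gromov
hyperbolic if and only if the induced subgraphs on the cover elements are uniformly
hyperbolic. -/
theorem hyperbolic_iff_uniform_hyperbolic_cover {X : Type*} (Γ : SimpleGraph X)
    (hconn : Γ.Connected) (A B : ℕ) (𝒴 : Set (Set X))
    (hcover : ∀ x : X, ∃ Y ∈ 𝒴, x ∈ Y)
    (h1 : ∀ Y ∈ 𝒴, (Γ.induce Y).Connected)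
    (h2 : ∀ Y ∈ 𝒴, ∃ r : X → Set Y, Γ.IsQuasiRetract Y A B r)
    (h3 : ∀ (x y z : X) (W₁ : Γ.Walk x y) (W₂ : Γ.Walk y z) (W₃ : Γ.Walk z x),
      Γ.IsGeodesicWalk W₁ → Γ.IsGeodesicWalk W₂ → Γ.IsGeodesicWalk W₃ →
        ∃ Y ∈ 𝒴, (∀ p ∈ W₁.support, p ∈ Y) ∧ (∀ p ∈ W₂.support, p ∈ Y) ∧
          (∀ p ∈ W₃.support, p ∈ Y)) :
    (∃ δ : ℕ, Γ.IsHyperbolic δ) ↔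
      (∃ δ : ℕ, ∀ Y ∈ 𝒴, (Γ.induce Y).IsHyperbolic δ) := by
  choose! r hr using h2
  exact hyperbolic_iff_uniform_hyperbolic_cover_general hconn h1 (fun Y hY ↦
    GraphHyperbolicity.dist_induce_le_of_isQuasiRetract hconn (h1 Y hY) (hr Y hY)) h3
end

section
/- Let α be a countable ordinal with α ≥ 1, let n ≥ 1 be a natural number, and let E be the ordinal space [0, ω^α · n], i.e. the set of ordinals ≤ ω^α · n with its order topology. Suppose 𝒫 is a finite collection of pairwise disjoint, nonempty, closed, proper subsets of E that is invariant under homeomorphisms of E: for every homeomorphism φ : E → E and every P ∈ 𝒫, the image φ(P) belongs to 𝒫. Then 𝒫 has at most n elements. -/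
/-!
Write `W = ω ^ α`. If `x ≤ W * n` is not a nonzero multiple of `W`, let `m` be the least multiple
of `W` above `x`. Then `x` is the right end of a clopen interval `[a, a + y]` with `y < W`. As `W`
is additively indecomposable, translates `[b, b + y]` of this interval occur arbitrarily close
below `m`, and exchanging the two intervals is a homeomorphism that fixes `m` and moves `x` close
to `m`. If a closed set `P` containing `x` has only finitely many images under homeomorphisms,
then the union of its images under those fixing `m` is closed, so `m` lies in one of them and hence
in `P`. So every member of the collection contains one of the `n` points `W * 1, …, W * n`.
-/

open Set Order Ordinal Topology

section Homeomorph

variable {X Y : Type*} [TopologicalSpace X] [TopologicalSpace Y]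

theorem exists_homeomorph_swap_range {i j : Y → X} (hi : IsOpenEmbedding i)
    (hj : IsOpenEmbedding j) (hi_closed : IsClosed (range i)) (hj_closed : IsClosed (range j))
    (hij : Disjoint (range i) (range j)) :
    ∃ φ : X ≃ₜ X, (∀ t, φ (i t) = j t) ∧ ∀ x ∉ range i ∪ range j, φ x = x := by
  let F : X → X := Function.extend i j (Function.extend j i id)
  have hFi (t : Y) : F (i t) = j t := hi.injective.extend_apply _ _ t
  have hFj (t : Y) : F (j t) = i t := by
    have hjt : ¬ ∃ s, i s = j t := hij.notMem_of_mem_right (mem_range_self t)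
    exact (Function.extend_apply' _ _ _ hjt).trans (hj.injective.extend_apply _ _ t)
  have hF_id (x : X) (hx : x ∉ range i ∪ range j) : F x = x := by
    rw [mem_union, not_or] at hx
    exact (Function.extend_apply' _ _ _ hx.1).trans (Function.extend_apply' _ _ _ hx.2)
  have hF_invol : Function.Involutive F := by
    intro x
    by_cases hx : x ∈ range i ∪ range j
    · rcases hx with ⟨t, rfl⟩ | ⟨t, rfl⟩
      · rw [hFi, hFj]
      · rw [hFj, hFi]
    · rw [hF_id x hx, hF_id x hx]
  have hF_cont : Continuous F := by
    refine continuous_iff_continuousAt.2 fun x => ?_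
    by_cases hx : x ∈ range i ∪ range j
    · rcases hx with ⟨t, rfl⟩ | ⟨t, rfl⟩
      · exact hi.continuousAt_iff.1 ((funext hFi : F ∘ i = j) ▸ hj.continuous.continuousAt)
      · exact hj.continuousAt_iff.1 ((funext hFj : F ∘ j = i) ▸ hi.continuous.continuousAt)
    · have hopen := (hi_closed.union hj_closed).isOpen_compl
      exact continuousAt_id.congr
        (Filter.eventuallyEq_of_mem (hopen.mem_nhds hx) fun z hz => (hF_id z hz).symm)
  exact ⟨⟨hF_invol.toPerm, hF_cont, hF_cont⟩, hFi, hF_id⟩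

/-- The orbit of `x` under the group of self-homeomorphisms of `X` that fix `m`. -/
def orbitFixing (m x : X) : Set X :=
  {z | ∃ φ : X ≃ₜ X, φ m = m ∧ φ x = z}

theorem mem_of_mem_closure_orbitFixing {P : Set X} {m x : X} (hP : IsClosed P)
    (hfin : (range fun φ : X ≃ₜ X => φ '' P).Finite) (hx : x ∈ P)
    (hm : m ∈ closure (orbitFixing m x)) : m ∈ P := by
  let images : Set (Set X) := {Q | ∃ φ : X ≃ₜ X, φ m = m ∧ φ '' P = Q}
  have himages_fin : images.Finite := hfin.subset fun _ ⟨φ, _, hQ⟩ => ⟨φ, hQ⟩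
  have himages_closed : IsClosed (⋃₀ images) := by
    rw [sUnion_eq_biUnion]
    refine himages_fin.isClosed_biUnion ?_
    rintro _ ⟨φ, -, rfl⟩
    exact φ.isClosed_image.2 hP
  have horbit : orbitFixing m x ⊆ ⋃₀ images := by
    rintro _ ⟨φ, hφm, rfl⟩
    exact ⟨φ '' P, ⟨φ, hφm, rfl⟩, mem_image_of_mem φ hx⟩
  obtain ⟨_, ⟨φ, hφm, rfl⟩, hmφ⟩ := closure_minimal horbit himages_closed hm
  rwa [← hφm, φ.injective.mem_set_image] at hmφ

end Homeomorph

section LinearOrder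

variable {L : Type*} [LinearOrder L] {a b m x N : L}

theorem apply_lt_of_fixes_Ici {f : L → L} (hf : Function.Injective f)
    (hfix : ∀ o, m ≤ o → f o = o) (hx : x < m) : f x < m := by
  by_contra! h
  exact hx.not_ge (hf (hfix _ h) ▸ h)

variable [TopologicalSpace L]

theorem exists_homeomorph_subtype_le (φ : L ≃ₜ L) (hfix : ∀ o, m ≤ o → φ o = o)
    (hm : m ≤ N) :
    ∃ ψ : {o // o ≤ N} ≃ₜ {o // o ≤ N}, ∀ o, (ψ o : L) = φ o := by
  refine ⟨φ.subtype fun o => ?_, fun _ => rfl⟩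
  rcases le_or_gt m o with ho | ho
  · rw [hfix o ho]
  · exact iff_of_true (ho.le.trans hm)
      ((apply_lt_of_fixes_Ici φ.injective hfix ho).le.trans hm)

theorem isOpen_Icc_of_not_isSuccLimit [OrderTopology L] [SuccOrder L] [NoMaxOrder L]
    (ha : ¬ IsSuccLimit a) : IsOpen (Icc a b) := by
  refine SuccOrder.isOpen_iff.2 fun o ho ho_lim => ?_
  have hao : a < o := ho.1.lt_of_ne fun h => ha (h ▸ ho_lim)
  exact ⟨a, hao, fun z hz => ⟨hz.1.le, hz.2.le.trans ho.2⟩⟩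

end LinearOrder

section Ordinal

variable {a b c d x y N W α β : Ordinal}

theorem range_add_Iic (a y : Ordinal) : (range fun t : Iic y => a + t) = Icc a (a + y) := by
  ext x
  constructor
  · rintro ⟨t, rfl⟩
    exact ⟨le_self_add, add_le_add_right t.2 a⟩
  · rintro ⟨hax, hxy⟩
    exact ⟨⟨x - a, Ordinal.sub_le.2 hxy⟩, Ordinal.add_sub_cancel_of_le hax⟩

theorem isOpenEmbedding_add_Iic (ha : ¬ IsSuccLimit a) (y : Ordinal) :
    IsOpenEmbedding fun t : Iic y => a + (t : Ordinal) := by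
  have hmono : StrictMono fun t : Iic y => a + (t : Ordinal) :=
    (isNormal_add_right a).strictMono.comp (Subtype.strictMono_coe _)
  have hrange := range_add_Iic a y
  exact ⟨hmono.isEmbedding_of_ordConnected (hrange ▸ ordConnected_Icc),
    hrange ▸ isOpen_Icc_of_not_isSuccLimit ha⟩

theorem exists_homeomorph_swap_Icc (ha : ¬ IsSuccLimit a) (hb : ¬ IsSuccLimit b)
    (hab : a + y < b) :
    ∃ φ : Ordinal ≃ₜ Ordinal, φ (a + y) = b + y ∧
      ∀ o ∉ Icc a (a + y) ∪ Icc b (b + y), φ o = o := by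
  have hdisj : Disjoint (Icc a (a + y)) (Icc b (b + y)) :=
    disjoint_left.2 fun _ hxa hxb => (hxa.2.trans_lt hab).not_ge hxb.1
  obtain ⟨φ, hφ, hφ_id⟩ := exists_homeomorph_swap_range
    (isOpenEmbedding_add_Iic ha y) (isOpenEmbedding_add_Iic hb y)
    (range_add_Iic a y ▸ isClosed_Icc) (range_add_Iic b y ▸ isClosed_Icc)
    (by rwa [range_add_Iic, range_add_Iic])
  rw [range_add_Iic, range_add_Iic] at hφ_id
  exact ⟨φ, hφ ⟨y, self_mem_Iic⟩, hφ_id⟩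

theorem add_lt_add_omega0_opow (hb : b < c + ω ^ α) (hy : y < ω ^ α) : b + y < c + ω ^ α := by
  obtain ⟨z, hz, hbz⟩ := (Ordinal.lt_add_iff (opow_pos α omega0_pos).ne').1 hb
  calc
    b + y ≤ c + z + y := by gcongr
    _ = c + (z + y) := add_assoc c z y
    _ < c + ω ^ α := by gcongr; exact isPrincipal_add_omega0_opow α hz hy

theorem exists_homeomorph_lt_apply (hα : α ≠ 0) (ha : ¬ IsSuccLimit a) (hy : y < ω ^ α)
    (hay : a + y < c + ω ^ α) (hd : d < c + ω ^ α) :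
    ∃ φ : Ordinal ≃ₜ Ordinal, d < φ (a + y) ∧ ∀ o, c + ω ^ α ≤ o → φ o = o := by
  have hlim : IsSuccLimit (c + ω ^ α) :=
    isSuccLimit_add c (isSuccLimit_opow_left isSuccLimit_omega0 hα)
  let b := succ (max d (a + y))
  have hby : b + y < c + ω ^ α := add_lt_add_omega0_opow (hlim.succ_lt (max_lt hd hay)) hy
  obtain ⟨φ, hφ, hφ_id⟩ := exists_homeomorph_swap_Icc ha (not_isSuccLimit_succ _)
    (lt_succ_of_le (le_max_right d (a + y)))
  refine ⟨φ, ?_, fun o ho => hφ_id o ?_⟩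
  · rw [hφ]
    exact (lt_succ_of_le (le_max_left d (a + y))).trans_le le_self_add
  · rintro (h | h)
    · exact (h.2.trans_lt hay).not_ge ho
    · exact (h.2.trans_lt hby).not_ge ho

theorem mem_closure_orbitFixing (hα : α ≠ 0) (ha : ¬ IsSuccLimit a) (hy : y < ω ^ α)
    {x m : {o // o ≤ N}} (hx : a + y = x) (hm : c + ω ^ α = m) (hxm : x < m) :
    m ∈ closure (orbitFixing m x) := by
  have hay : a + y < c + ω ^ α := by rwa [hx, hm]
  refine closure_subtype.2 (mem_closure_iff_nhds.2 fun U hU => ?_)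
  obtain ⟨d, hd, hdU⟩ := exists_Ioc_subset_of_mem_nhds hU ⟨_, hxm⟩
  obtain ⟨φ, hdφ, hfix⟩ := exists_homeomorph_lt_apply hα ha hy hay (hd.trans_eq hm.symm)
  rw [hx] at hdφ
  rw [hm] at hfix
  obtain ⟨ψ, hψ⟩ := exists_homeomorph_subtype_le φ hfix m.2
  have hψm : ψ m = m := Subtype.ext ((hψ m).trans (hfix m le_rfl))
  have hφx : φ x < m := apply_lt_of_fixes_Ici φ.injective hfix hxm
  exact ⟨φ x, hdU ⟨hdφ, hφx.le⟩, ψ x, ⟨ψ, hψm, rfl⟩, hψ x⟩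

theorem exists_not_isSuccLimit_add_eq (hW : W ≠ 0) (hx : W ∣ x → x = 0) :
    ∃ a y, ¬ IsSuccLimit a ∧ y < W ∧ a + y = x := by
  by_cases hdvd : W ∣ x
  · exact ⟨0, 0, not_isSuccLimit_bot, pos_iff_ne_zero.2 hW, by rw [hx hdvd, add_zero]⟩
  have hr : 1 ≤ x % W := one_le_iff_ne_zero.2 fun h => hdvd (dvd_of_mod_eq_zero h)
  refine ⟨succ (W * (x / W)), x % W - 1, not_isSuccLimit_succ _,
    (sub_le_self _ _).trans_lt (mod_lt x hW), ?_⟩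
  rw [succ_eq_add_one, add_assoc, Ordinal.add_sub_cancel_of_le hr, div_add_mod]

theorem exists_omega0_opow_mul_mem (hα : α ≠ 0) (hβ : β ≠ 0) {P : Set {o // o ≤ ω ^ α * β}}
    (hP : IsClosed P) (hne : P.Nonempty)
    (hfin : (range fun φ : {o // o ≤ ω ^ α * β} ≃ₜ {o // o ≤ ω ^ α * β} => φ '' P).Finite) :
    ∃ k, k ≠ 0 ∧ k ≤ β ∧ ω ^ α * k ∈ Subtype.val '' P := by
  obtain ⟨x, hx⟩ := hne
  have hW_pos : 0 < ω ^ α := opow_pos α omega0_pos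
  by_cases hmul : ω ^ α ∣ x → (x : Ordinal) = 0
  · have hxβ : (x : Ordinal) < ω ^ α * β := x.2.lt_of_ne fun h =>
      mul_ne_zero hW_pos.ne' hβ (h.symm.trans (hmul ⟨β, h⟩))
    let k := succ (x / ω ^ α)
    have hk : k ≤ β := succ_le_of_lt ((lt_mul_iff_div_lt hW_pos.ne').1 hxβ)
    let m : {o // o ≤ ω ^ α * β} := ⟨ω ^ α * k, by gcongr⟩
    obtain ⟨a, y, ha, hy, hay⟩ := exists_not_isSuccLimit_add_eq hW_pos.ne' hmul
    have hm : m ∈ closure (orbitFixing m x) :=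
      mem_closure_orbitFixing hα ha hy hay (mul_succ _ _).symm (lt_mul_succ_div x hW_pos.ne')
    exact ⟨k, succ_ne_bot _, hk, m, mem_of_mem_closure_orbitFixing hP hfin hx hm, rfl⟩
  · push Not at hmul
    obtain ⟨⟨k, hk⟩, hx_ne⟩ := hmul
    refine ⟨k, right_ne_zero_of_mul (hk ▸ hx_ne), ?_, x, hx, hk⟩
    exact le_of_mul_le_mul_left (hk ▸ x.2) hW_pos

end Ordinal

theorem invariant_collection_card_le_general {α : Ordinal} (hα : α ≠ 0) {n : ℕ} (hn : n ≠ 0)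
    (𝒮 : Finset (Set {o : Ordinal // o ≤ ω ^ α * n}))
    (hdisj : (𝒮 : Set (Set {o : Ordinal // o ≤ ω ^ α * n})).PairwiseDisjoint id)
    (hne : ∀ P ∈ 𝒮, P.Nonempty) (hclosed : ∀ P ∈ 𝒮, IsClosed P)
    (hinv : ∀ φ : {o : Ordinal // o ≤ ω ^ α * n} ≃ₜ {o : Ordinal // o ≤ ω ^ α * n},
      ∀ P ∈ 𝒮, φ '' P ∈ 𝒮) :
    𝒮.card ≤ n := by
  have hmeets : ∀ P ∈ 𝒮, ∃ k ∈ Finset.Icc 1 n, ω ^ α * (k : Ordinal) ∈ Subtype.val '' P := by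
    intro P hP
    have hfin := 𝒮.finite_toSet.subset (range_subset_iff.2 fun φ => hinv φ P hP)
    obtain ⟨k, hk_ne, hkn, hkP⟩ := exists_omega0_opow_mul_mem hα (Nat.cast_ne_zero.2 hn)
      (hclosed P hP) (hne P hP) hfin
    obtain ⟨k, rfl⟩ := lt_omega0.1 (hkn.trans_lt (natCast_lt_omega0 n))
    exact ⟨k, Finset.mem_Icc.2 ⟨Nat.one_le_iff_ne_zero.2 (Nat.cast_ne_zero.1 hk_ne),
      Nat.cast_le.1 hkn⟩, hkP⟩
  have hunique : ∀ k ∈ Finset.Icc 1 n,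
      ({P ∈ 𝒮 | ω ^ α * (k : Ordinal) ∈ Subtype.val '' P} : Set _).Subsingleton := by
    rintro k - P ⟨hP, e, heP, he⟩ Q ⟨hQ, e', heQ, he'⟩
    obtain rfl : e = e' := Subtype.ext (he.trans he'.symm)
    exact hdisj.elim_set hP hQ e heP heQ
  simpa using Finset.card_le_card_of_forall_subsingleton _ hmeets hunique

/-- Topological content of the paper's Lemma on countable end spaces (upper bound):
in the ordinal space `[0, ω^α · n]` (a countable compact Hausdorff space with
characteristic system `(α, n)`), any finite homeomorphism-invariant collection of
pairwise disjoint, nonempty, closed, proper subsets has at most `n` members. -/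
theorem invariant_collection_card_le {α : Ordinal} (hα1 : 1 ≤ α)
    (hαc : α.card ≤ Cardinal.aleph0) {n : ℕ} (hn : 1 ≤ n)
    (𝒮 : Finset (Set {o : Ordinal // o ≤ Ordinal.omega0 ^ α * n}))
    (hdisj : ∀ P ∈ 𝒮, ∀ Q ∈ 𝒮, P ≠ Q → Disjoint P Q)
    (hne : ∀ P ∈ 𝒮, P.Nonempty)
    (hclosed : ∀ P ∈ 𝒮, IsClosed P)
    (hproper : ∀ P ∈ 𝒮, P ≠ Set.univ)
    (hinv : ∀ φ : {o : Ordinal // o ≤ Ordinal.omega0 ^ α * n} ≃ₜ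
        {o : Ordinal // o ≤ Ordinal.omega0 ^ α * n},
      ∀ P ∈ 𝒮, (φ : _ → _) '' P ∈ 𝒮) :
    𝒮.card ≤ n :=
  invariant_collection_card_le_general (Order.one_le_iff_ne_zero.1 hα1)
    (Nat.one_le_iff_ne_zero.1 hn) 𝒮 hdisj hne hclosed hinv
end

section
/- Let α be an ordinal with α ≥ 1 and let n ≥ 1 be a natural number. Every homeomorphism φ of the ordinal space E = [0, ω^α · n] (the set of ordinals ≤ ω^α · n with its order topology) maps the finite set {ω^α · k : 1 ≤ k ≤ n} bijectively onto itself. -/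
/-!
Homeomorphisms preserve every Cantor–Bendixson derivative of a space, so it suffices to recognise
the points `ω ^ α * k` as the `α`-th derivative of `[0, ω ^ α * n]`. As initial segments are open,
derivatives can be computed among all ordinals, where for `β ≠ 0` the `β`-th derivative consists of
the nonzero multiples of `ω ^ β`: the accumulation points of the range of a normal function are its
values at limit ordinals, so deriving the multiples of `ω ^ β` leaves the nonzero multiples of
`ω ^ β * ω`.
-/

section

open Filter Order Ordinal Set Topology
open scoped CantorBendixson

universe u

section OpenEmbedding

variable {X Y : Type u} [TopologicalSpace X] [TopologicalSpace Y] {f : X → Y}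

theorem preimage_relDerivedSet_of_isOpenEmbedding (hf : IsOpenEmbedding f) (t : Set Y) :
    f ⁻¹' relDerivedSet t = relDerivedSet (f ⁻¹' t) := by
  ext x
  simp only [relDerivedSet_apply, preimage_inter, mem_inter_iff, mem_preimage, mem_derivedSet,
    ← comap_principal, hf.accPt_comap_iff]

theorem preimage_iteratedDerivedSet_of_isOpenEmbedding (hf : IsOpenEmbedding f) (t : Set Y)
    (a : Ordinal.{u}) : f ⁻¹' tᵈ[a] = (f ⁻¹' t)ᵈ[a] := by
  induction a using limitRecOn with
  | zero => simp only [CantorBendixson.iteratedDerivedSet_zero]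
  | add_one a ih =>
    simp only [CantorBendixson.iteratedDerivedSet_succ,
      preimage_relDerivedSet_of_isOpenEmbedding hf, ih]
  | limit a ha ih =>
    simp only [CantorBendixson.iteratedDerivedSet_limit ha, preimage_iInter]
    exact iInter_congr fun b ↦ ih b b.2

theorem image_iteratedDerivedSet_univ_of_homeomorph (φ : X ≃ₜ Y) (a : Ordinal.{u}) :
    φ '' univᵈ[a] = univᵈ[a] := by
  rw [← preimage_univ (f := φ), ← preimage_iteratedDerivedSet_of_isOpenEmbedding
    φ.isOpenEmbedding, image_preimage_eq _ φ.surjective]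

end OpenEmbedding

theorem notMem_iteratedDerivedSet_of_not_accPt {X : Type u} [TopologicalSpace X] {s : Set X}
    {x : X} (hx : ¬ AccPt x (𝓟 s)) {a : Ordinal.{u}} (ha : a ≠ 0) : x ∉ sᵈ[a] := by
  intro hxa
  have hx1 : x ∈ sᵈ[0 + 1] :=
    CantorBendixson.iteratedDerivedSet_antitone s (by simpa [one_le_iff_ne_zero] using ha) hxa
  simp only [CantorBendixson.iteratedDerivedSet_succ,
    CantorBendixson.iteratedDerivedSet_zero] at hx1
  exact hx hx1.1

theorem derivedSet_sdiff_singleton {X : Type*} [TopologicalSpace X] [T1Space X] (s : Set X)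
    (x : X) : derivedSet (s \ {x}) = derivedSet s := by
  ext y
  simp only [mem_derivedSet, accPt_iff_frequently_nhdsNE]
  have hne : ∀ᶠ z in 𝓝[≠] y, z ≠ x := by
    rcases eq_or_ne y x with rfl | hyx
    · exact eventually_mem_nhdsWithin
    · exact eventually_nhdsWithin_of_eventually_nhds (eventually_ne_nhds hyx)
  exact frequently_congr (hne.mono fun z hz ↦ and_iff_left hz)

theorem accPt_range_iff_isSuccLimit_of_isNormal {α β : Type*} [LinearOrder α] [LinearOrder β]
    [TopologicalSpace β] [OrderTopology β] [SuccOrder β] [NoMaxOrder β] {f : α → β}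
    (hf : IsNormal f) {a : α} : AccPt (f a) (𝓟 (range f)) ↔ IsSuccLimit a := by
  rw [SuccOrder.accPt_principal]
  constructor
  · rintro ⟨hmin, hIoo⟩
    refine ⟨fun ha ↦ ?_, fun b hb ↦ ?_⟩
    · obtain ⟨c, hc⟩ := not_isMin_iff.1 hmin
      obtain ⟨_, ⟨b, rfl⟩, -, hb⟩ := hIoo c hc
      exact ha.not_lt (hf.strictMono.lt_iff_lt.1 hb)
    · obtain ⟨_, ⟨c, rfl⟩, hbc, hca⟩ := hIoo (f b) (hf.strictMono hb.lt)
      exact hb.2 (hf.strictMono.lt_iff_lt.1 hbc) (hf.strictMono.lt_iff_lt.1 hca)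
  · refine fun ha ↦ ⟨(hf.map_isSuccLimit ha).not_isMin, fun c hc ↦ ?_⟩
    obtain ⟨b, hb, hcb⟩ := (hf.lt_iff_exists_lt ha).1 hc
    exact ⟨f b, mem_range_self b, hcb, hf.strictMono hb⟩

section IsNormal

variable {α : Type*} [LinearOrder α] [WellFoundedLT α] [OrderBot α] [SuccOrder α] [NoMaxOrder α]
  [TopologicalSpace α] [OrderTopology α] {f : α → α}

theorem isClosed_range_of_isNormal (hf : IsNormal f) : IsClosed (range f) := by
  refine (isClosed_iff_derivedSet_subset _).2 fun x hx ↦ ?_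
  obtain ⟨hmin, hIoo⟩ := SuccOrder.accPt_principal.1 hx
  obtain ⟨_, ⟨c, rfl⟩, -, hcx⟩ := hIoo ⊥ (bot_lt_iff_ne_bot.2 (mt isMin_iff_eq_bot.2 hmin))
  obtain ⟨a, hax, hxa⟩ := hf.exists_map_le_lt_map_succ ((hf.monotone bot_le).trans hcx.le)
  refine hax.eq_or_lt.elim (fun h ↦ ⟨a, h⟩) fun hlt ↦ ?_
  obtain ⟨_, ⟨b, rfl⟩, hab, hbx⟩ := hIoo (f a) hlt
  have hb : b ≤ a := lt_succ_iff.1 (hf.strictMono.lt_iff_lt.1 (hbx.trans hxa))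
  exact absurd hab (hf.monotone hb).not_gt

theorem derivedSet_range_of_isNormal (hf : IsNormal f) :
    derivedSet (range f) = f '' {a | IsSuccLimit a} := by
  ext x
  constructor
  · intro hx
    obtain ⟨a, rfl⟩ := (isClosed_iff_derivedSet_subset _).1 (isClosed_range_of_isNormal hf) hx
    exact ⟨a, (accPt_range_iff_isSuccLimit_of_isNormal hf).1 hx, rfl⟩
  · rintro ⟨a, ha, rfl⟩
    exact (accPt_range_iff_isSuccLimit_of_isNormal hf).2 ha

end IsNormal

theorem derivedSet_setOf_dvd {a : Ordinal.{u}} (ha : a ≠ 0) :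
    derivedSet {o | a ∣ o} = {o | a * ω ∣ o} \ {0} := by
  have hrange : {o | a ∣ o} = range (a * ·) := by
    ext o
    exact exists_congr fun q ↦ eq_comm
  rw [hrange, derivedSet_range_of_isNormal (isNormal_mul_right (pos_iff_ne_zero.2 ha))]
  ext o
  constructor
  · rintro ⟨q, hq, rfl⟩
    exact ⟨mul_dvd_mul_left a (isSuccPrelimit_iff_omega0_dvd.1 hq.isSuccPrelimit),
      mul_ne_zero ha hq.ne_bot⟩
  · rintro ⟨⟨q, rfl⟩, hq⟩
    rw [mul_assoc] at hq ⊢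
    have hlimit : IsSuccLimit (ω * q) := isSuccLimit_iff_of_orderBot.2
      ⟨right_ne_zero_of_mul hq, isSuccPrelimit_iff_omega0_dvd.2 (dvd_mul_right ω q)⟩
    exact mem_image_of_mem (a * ·) hlimit

theorem opow_dvd_iff_of_isSuccLimit {a β o : Ordinal.{u}} (ha : a ≠ 0) (hβ : IsSuccLimit β) :
    a ^ β ∣ o ↔ ∀ γ < β, a ^ γ ∣ o := by
  refine ⟨fun h γ hγ ↦ (opow_dvd_opow a hγ.le).trans h, fun h ↦ ?_⟩
  have hpow : a ^ β ≠ 0 := opow_ne_zero β ha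
  apply dvd_of_mod_eq_zero
  by_contra hmod
  refine (mod_lt o hpow).not_ge ((opow_le_of_isSuccLimit ha hβ).2 fun γ hγ ↦ le_of_dvd hmod ?_)
  have hdvd := h γ hγ
  rw [← div_add_mod o (a ^ β)] at hdvd
  exact (dvd_add_iff ((opow_dvd_opow a hγ.le).mul_right _)).1 hdvd

-- The derivatives of a space in `Type (u + 1)` are indexed by `Ordinal.{u + 1}`, hence the lift.
theorem mem_iteratedDerivedSet_univ_iff_opow_dvd {β o : Ordinal.{u}} (ho : o ≠ 0) :
    o ∈ univᵈ[lift.{u + 1} β] ↔ ω ^ β ∣ o := by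
  induction β using limitRecOn generalizing o with
  | zero => simp
  | add_one β ih =>
    have hmultiples : univᵈ[lift.{u + 1} β] \ {0} = {o : Ordinal.{u} | ω ^ β ∣ o} \ {0} := by
      ext o
      exact and_congr_left ih
    have hderived :
        derivedSet univᵈ[lift.{u + 1} β] = {o : Ordinal.{u} | ω ^ (β + 1) ∣ o} \ {0} := by
      rw [← derivedSet_sdiff_singleton, hmultiples, derivedSet_sdiff_singleton,
        derivedSet_setOf_dvd (opow_ne_zero β omega0_ne_zero), opow_add_one]
    rw [lift_add_one, CantorBendixson.iteratedDerivedSet_succ, relDerivedSet_apply, hderived,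
      mem_inter_iff, ih ho]
    exact ⟨fun h ↦ h.1.1, fun h ↦ ⟨⟨h, ho⟩, (opow_dvd_opow ω le_self_add).trans h⟩⟩
  | limit β hβ ih =>
    rw [CantorBendixson.iteratedDerivedSet_limit (isSuccLimit_lift.2 hβ),
      opow_dvd_iff_of_isSuccLimit omega0_ne_zero hβ]
    simp only [mem_iInter, Subtype.forall, mem_Iio, lt_lift_iff]
    constructor
    · exact fun h γ hγ ↦ (ih γ hγ ho).1 (h _ ⟨γ, hγ, rfl⟩)
    · rintro h _ ⟨γ, hγ, rfl⟩
      exact (ih γ hγ ho).2 (h γ hγ)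

theorem iteratedDerivedSet_univ_eq_setOf_opow_dvd {β : Ordinal.{u}} (hβ : β ≠ 0) :
    univᵈ[lift.{u + 1} β] = {o : Ordinal.{u} | ω ^ β ∣ o} \ {0} := by
  ext o
  rcases eq_or_ne o 0 with rfl | ho
  · have hzero : ¬ AccPt (0 : Ordinal.{u}) (𝓟 univ) := fun h ↦ h.not_isMin isMin_bot
    have hnotMem : (0 : Ordinal.{u}) ∉ univᵈ[lift.{u + 1} β] :=
      notMem_iteratedDerivedSet_of_not_accPt hzero fun h ↦ hβ (lift_inj.1 (h.trans lift_zero.symm))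
    simp [hnotMem]
  · simp [mem_iteratedDerivedSet_univ_iff_opow_dvd, ho]

theorem exists_natCast_mul_iff_of_le {a o : Ordinal.{u}} {n : ℕ} (ha : a ≠ 0) (ho : o ≤ a * n) :
    (∃ k : ℕ, 1 ≤ k ∧ k ≤ n ∧ o = a * k) ↔ a ∣ o ∧ o ≠ 0 := by
  constructor
  · rintro ⟨k, hk, -, rfl⟩
    exact ⟨dvd_mul_right a k, mul_ne_zero ha (by exact_mod_cast Nat.one_le_iff_ne_zero.1 hk)⟩
  · rintro ⟨⟨q, rfl⟩, hq⟩
    have hqn : q ≤ n := (mul_le_mul_iff_right₀ (pos_iff_ne_zero.2 ha)).1 ho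
    obtain ⟨k, rfl⟩ := lt_omega0.1 (hqn.trans_lt (natCast_lt_omega0 n))
    have hk : k ≠ 0 := by
      rintro rfl
      simp at hq
    exact ⟨k, Nat.one_le_iff_ne_zero.2 hk, by exact_mod_cast hqn, rfl⟩

theorem setOf_opow_mul_natCast_eq_iteratedDerivedSet {α : Ordinal.{u}} (hα : α ≠ 0) (n : ℕ) :
    {x : {o : Ordinal.{u} // o ≤ ω ^ α * n} | ∃ k : ℕ, 1 ≤ k ∧ k ≤ n ∧ (x : Ordinal) = ω ^ α * k} =
      univᵈ[lift.{u + 1} α] := by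
  have hval : IsOpenEmbedding (Subtype.val : {o : Ordinal.{u} // o ≤ ω ^ α * n} → Ordinal) :=
    (isLowerSet_Iic (ω ^ α * n)).isOpen.isOpenEmbedding_subtypeVal
  have huniv : (univ : Set {o : Ordinal.{u} // o ≤ ω ^ α * n})ᵈ[lift.{u + 1} α] =
      Subtype.val ⁻¹' ({o | ω ^ α ∣ o} \ {0}) := by
    rw [← iteratedDerivedSet_univ_eq_setOf_opow_dvd hα,
      preimage_iteratedDerivedSet_of_isOpenEmbedding hval, preimage_univ]
  rw [huniv]
  ext x
  exact exists_natCast_mul_iff_of_le (opow_ne_zero α omega0_ne_zero) x.2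

end

/-- Supporting claim for the lower bound of the paper's Lemma on countable end spaces:
every homeomorphism of the ordinal space `[0, ω^α · n]` maps the finite set
`{ω^α · k : 1 ≤ k ≤ n}` (the points of maximal Cantor–Bendixson rank) bijectively
onto itself. -/
theorem homeomorph_preserves_top_rank_points {α : Ordinal} (hα : 1 ≤ α)
    {n : ℕ} (hn : 1 ≤ n)
    (φ : {o : Ordinal // o ≤ Ordinal.omega0 ^ α * n} ≃ₜ
      {o : Ordinal // o ≤ Ordinal.omega0 ^ α * n}) :
    (φ : _ → _) ''
        {x : {o : Ordinal // o ≤ Ordinal.omega0 ^ α * n} |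
          ∃ k : ℕ, 1 ≤ k ∧ k ≤ n ∧ (x : Ordinal) = Ordinal.omega0 ^ α * k} =
      {x : {o : Ordinal // o ≤ Ordinal.omega0 ^ α * n} |
          ∃ k : ℕ, 1 ≤ k ∧ k ≤ n ∧ (x : Ordinal) = Ordinal.omega0 ^ α * k} := by
  rw [setOf_opow_mul_natCast_eq_iteratedDerivedSet (Order.one_le_iff_ne_zero.1 hα)]
  exact image_iteratedDerivedSet_univ_of_homeomorph φ _
end
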